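/- Let p be a prime, ν ∈ ℤ, and z ∈ ℚ_p with ord_p(z) < ν or z = 0. Then the limits μ_p(z,ν) = lim_{n→∞} F_n(z,ν) exist and are given by: (i) if z ∈ ℤ_p (including z = 0) and ν ≥ 1, then μ_p(z,ν) = 1/(p^ν + p^(ν−1)); (ii) if ord_p(z) = −λ < 0, then μ_p(z,ν) = 1/(p^(ν+2λ) + p^(ν+2λ−1)); (iii) for z = 0 and every ν ≥ 0, μ_p(0,−ν) = 1 − 1/(p^(ν+1) + p^ν). -/

import Mathlib

open Filter

/-- The generations of the Calkin–Wilf tree: `CW 0 = [1/1]` is the first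
generation, and each generation is obtained from the previous one by replacing
each entry `x` by `x/(x+1)` and `x+1`, in this order.  Thus the `n`-th
generation of the paper is `CW (n-1)`. -/
def CW : ℕ → List ℚ
  | 0 => [1]
  | n + 1 => (CW n).flatMap (fun x => [x / (x + 1), x + 1])

open scoped Classical in
/-- `FcwP p ν z (n-1) = F_n(z,ν) = 2^(1-n) · #{j : ord_p(x_j^(n) − z) ≥ ν}` is
the proportion of entries of the `n`-th generation of the Calkin–Wilf tree
(viewed in `ℚ_p`) lying in the ball `{u : ord_p(u − z) ≥ ν}`, the latter
condition being expressed via the `p`-adic norm as `‖u − z‖_p ≤ p^(−ν)`. -/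
noncomputable def FcwP (p : ℕ) [Fact p.Prime] (ν : ℤ) (z : ℚ_[p]) (n : ℕ) : ℝ :=
  ((CW n).countP (fun q => decide (‖(q : ℚ_[p]) - z‖ ≤ (p : ℝ) ^ (-ν)))) / 2 ^ n

/-!
For `w ∈ ℤ_p` and `N ≥ 1`, a rational `a / b` in lowest terms lies within `p ^ (-N)` of `w` if and
only if `a ≡ w b` modulo `p ^ N`. Modulo `p ^ N`, the two children of a node arise from `(a, b)` by
the shears `(a, a + b)` and `(a + b, b)`, so descending the tree along random branches is a random
walk on the coprime pairs of `ℤ / p ^ N`. Its transition matrix is doubly stochastic; it is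
irreducible since shears act transitively on coprime pairs over a local ring, and aperiodic since
`(0, 1)` is fixed by one of them. Hence the walk equidistributes, and the limit for an integral
centre is the proportion of coprime pairs of ratio `w`. Every generation is stable under inversion,
which exchanges balls around `z` and `z⁻¹` not containing `0`, and turns the complement of a ball
around `0` into another such ball; this gives the remaining cases.
-/

section DoublyStochastic

variable {n : Type*} [Fintype n] [DecidableEq n] {M N : Matrix n n ℝ}

/-- The transition matrix of independent uniform sampling, all of whose entries are `1 / |n|`. -/
noncomputable def uniformMatrix (n : Type*) [Fintype n] : Matrix n n ℝ :=
  Matrix.of fun _ _ => (Fintype.card n : ℝ)⁻¹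

lemma mul_uniformMatrix (hM : M ∈ doublyStochastic ℝ n) :
    M * uniformMatrix n = uniformMatrix n := by
  ext i j
  simp only [uniformMatrix, Matrix.mul_apply, Matrix.of_apply, ← Finset.sum_mul,
    sum_row_of_mem_doublyStochastic hM, one_mul]

lemma uniformMatrix_mul (hM : M ∈ doublyStochastic ℝ n) :
    uniformMatrix n * M = uniformMatrix n := by
  ext i j
  simp only [uniformMatrix, Matrix.mul_apply, Matrix.of_apply, ← Finset.mul_sum,
    sum_col_of_mem_doublyStochastic hM, mul_one]

lemma abs_sub_le_one_of_mem_doublyStochastic (hM : M ∈ doublyStochastic ℝ n)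
    (hN : N ∈ doublyStochastic ℝ n) (i j : n) : |M i j - N i j| ≤ 1 := by
  rw [abs_sub_le_iff]
  constructor <;>
    linarith [nonneg_of_mem_doublyStochastic hM (i := i) (j := j),
      nonneg_of_mem_doublyStochastic hN (i := i) (j := j),
      le_one_of_mem_doublyStochastic hM (i := i) (j := j),
      le_one_of_mem_doublyStochastic hN (i := i) (j := j)]

lemma uniformMatrix_mem_doublyStochastic [Nonempty n] : uniformMatrix n ∈ doublyStochastic ℝ n := by
  refine mem_doublyStochastic_iff_sum.2 ⟨fun _ _ => ?_, fun _ => ?_, fun _ => ?_⟩ <;>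
    simp [uniformMatrix]

lemma exists_eq_smul_uniformMatrix_add [Nonempty n] (hM : M ∈ doublyStochastic ℝ n)
    (hpos : ∀ i j, 0 < M i j) :
    ∃ ε ∈ Set.Ioo (0 : ℝ) 1, ∃ N ∈ doublyStochastic ℝ n,
      M = ε • uniformMatrix n + (1 - ε) • N := by
  obtain ⟨i₀, hmin⟩ := Finite.exists_min fun x : n × n => M x.1 x.2
  have hcard : (0 : ℝ) < Fintype.card n := by exact_mod_cast Fintype.card_pos
  set ε := min (M i₀.1 i₀.2 * Fintype.card n) 2⁻¹
  have hε₀ : 0 < ε := lt_min (mul_pos (hpos _ _) hcard) (by norm_num)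
  have hε₁ : ε < 1 := (min_le_right _ _).trans_lt (by norm_num)
  have hle (i j : n) : ε * (Fintype.card n : ℝ)⁻¹ ≤ M i j := by
    rw [← div_eq_mul_inv, div_le_iff₀ hcard]
    exact (min_le_left _ _).trans (mul_le_mul_of_nonneg_right (hmin (i, j)) hcard.le)
  obtain ⟨N, hN, hMN⟩ := (exists_mem_doublyStochastic_eq_smul_iff
    (M := M - ε • uniformMatrix n) (sub_nonneg.2 hε₁.le)).2
    ⟨fun i j => by simpa [uniformMatrix] using hle i j,
      fun i => by simp [uniformMatrix, sum_row_of_mem_doublyStochastic hM, mul_left_comm _ ε],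
      fun j => by simp [uniformMatrix, sum_col_of_mem_doublyStochastic hM, mul_left_comm _ ε]⟩
  exact ⟨ε, ⟨hε₀, hε₁⟩, N, hN, by rw [← hMN, add_sub_cancel]⟩

lemma smul_uniformMatrix_add_pow [Nonempty n] (hN : N ∈ doublyStochastic ℝ n) (ε : ℝ) (k : ℕ) :
    (ε • uniformMatrix n + (1 - ε) • N) ^ k =
      uniformMatrix n + (1 - ε) ^ k • (N ^ k - uniformMatrix n) := by
  induction k with
  | zero => simp
  | succ k ih =>
    simp only [pow_succ _ k, ih, add_mul, mul_add, sub_mul, mul_smul_comm, smul_mul_assoc,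
      uniformMatrix_mul hN, mul_uniformMatrix uniformMatrix_mem_doublyStochastic,
      mul_uniformMatrix (pow_mem hN k)]
    module

theorem tendsto_pow_apply_of_mem_doublyStochastic (hM : M ∈ doublyStochastic ℝ n)
    (hprim : M.IsPrimitive) (i j : n) :
    Tendsto (fun k => (M ^ k) i j) atTop (nhds (Fintype.card n : ℝ)⁻¹) := by
  have : Nonempty n := ⟨i⟩
  obtain ⟨K, hK, hpos⟩ := hprim.exists_pos_pow
  obtain ⟨ε, hε, N, hN, hMN⟩ := exists_eq_smul_uniformMatrix_add (pow_mem hM K) hpos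
  have hpow (k : ℕ) : M ^ k = uniformMatrix n +
      (1 - ε) ^ (k / K) • (M ^ (k % K) * N ^ (k / K) - uniformMatrix n) := by
    conv_lhs => rw [← Nat.mod_add_div k K, pow_add, pow_mul, hMN, smul_uniformMatrix_add_pow hN]
    simp only [mul_add, mul_smul_comm, mul_sub, mul_uniformMatrix (pow_mem hM (k % K))]
  have hrate (k : ℕ) : 0 ≤ (1 - ε) ^ k := pow_nonneg (sub_nonneg.2 hε.2.le) k
  have hbound (k : ℕ) : ‖(M ^ k) i j - (Fintype.card n : ℝ)⁻¹‖ ≤ (1 - ε) ^ (k / K) := by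
    have hdiff : (M ^ k) i j - (Fintype.card n : ℝ)⁻¹ = (1 - ε) ^ (k / K) *
        ((M ^ (k % K) * N ^ (k / K)) i j - uniformMatrix n i j) := by
      rw [hpow k]
      simp [uniformMatrix]
    rw [hdiff, norm_mul, Real.norm_of_nonneg (hrate _), Real.norm_eq_abs]
    exact mul_le_of_le_one_right (hrate _)
      (abs_sub_le_one_of_mem_doublyStochastic (mul_mem (pow_mem hM _) (pow_mem hN _))
        uniformMatrix_mem_doublyStochastic i j)
  refine tendsto_iff_norm_sub_tendsto_zero.2 (squeeze_zero (fun _ => norm_nonneg _) hbound ?_)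
  exact (tendsto_pow_atTop_nhds_zero_of_lt_one (sub_nonneg.2 hε.2.le)
    (sub_lt_self 1 hε.1)).comp (Nat.tendsto_div_const_atTop hK.ne')

end DoublyStochastic

section Primitive

variable {R n : Type*} [Ring R] [LinearOrder R] [IsOrderedRing R] [PosMulStrictMono R]
  [Fintype n] [DecidableEq n] {M : Matrix n n R}

lemma matrix_pow_add_apply_pos (hM : ∀ i j, 0 ≤ M i j) {a b : ℕ} {i j k : n}
    (hij : 0 < (M ^ a) i j) (hjk : 0 < (M ^ b) j k) : 0 < (M ^ (a + b)) i k := by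
  rw [pow_add, Matrix.mul_apply]
  have hterm (l : n) : 0 ≤ (M ^ a) i l * (M ^ b) l k :=
    mul_nonneg (M.pow_apply_nonneg hM a i l) (M.pow_apply_nonneg hM b l k)
  exact Finset.sum_pos' (fun l _ => hterm l) ⟨j, Finset.mem_univ j, mul_pos hij hjk⟩

variable [Nontrivial R]

lemma matrix_pow_apply_self_pos (hM : ∀ i j, 0 ≤ M i j) {i : n} (hi : 0 < M i i) (k : ℕ) :
    0 < (M ^ k) i i := by
  induction k with
  | zero => simp
  | succ k ih => exact matrix_pow_add_apply_pos hM ih (by simpa using hi)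

theorem isPrimitive_of_isIrreducible_of_apply_self_pos (hM : M.IsIrreducible) {o : n}
    (ho : 0 < M o o) : M.IsPrimitive := by
  have hreach := (Matrix.isIrreducible_iff_exists_pow_pos hM.nonneg).1 hM
  choose a ha₀ ha using fun i => hreach i o
  choose b _ hb using fun j => hreach o j
  have ha_le (i : n) : a i ≤ ∑ i, a i :=
    Finset.single_le_sum (fun _ _ => Nat.zero_le _) (Finset.mem_univ i)
  have hb_le (j : n) : b j ≤ ∑ j, b j :=
    Finset.single_le_sum (fun _ _ => Nat.zero_le _) (Finset.mem_univ j)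
  refine ⟨hM.nonneg, ∑ i, a i + ∑ j, b j, Nat.add_pos_left ((ha₀ o).trans_le (ha_le o)) _,
    fun i j => ?_⟩
  have hwait := matrix_pow_apply_self_pos hM.nonneg ho (∑ i, a i - a i + (∑ j, b j - b j))
  have hpos := matrix_pow_add_apply_pos hM.nonneg
    (matrix_pow_add_apply_pos hM.nonneg (ha i) hwait) (hb j)
  have hsum : a i + (∑ i, a i - a i + (∑ j, b j - b j)) + b j = ∑ i, a i + ∑ j, b j := by
    have := ha_le i
    have := hb_le j
    omega
  rwa [hsum] at hpos

end Primitive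

section PermWalk

variable {ι n : Type*} [Fintype ι] [DecidableEq n] {σ : ι → Equiv.Perm n}

/-- The transition matrix of the random walk that moves from `x` to `σ i x`, with `i` drawn
uniformly from `ι`. -/
noncomputable def permWalk (σ : ι → Equiv.Perm n) : Matrix n n ℝ :=
  ∑ i, (Fintype.card ι : ℝ)⁻¹ • (σ i).permMatrix ℝ

lemma permWalk_apply (σ : ι → Equiv.Perm n) (x y : n) :
    permWalk σ x y = ∑ i, if σ i x = y then (Fintype.card ι : ℝ)⁻¹ else 0 := by
  simp [permWalk, Matrix.sum_apply, Equiv.Perm.permMatrix, PEquiv.toMatrix_apply, eq_comm]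

lemma permWalk_apply_nonneg (σ : ι → Equiv.Perm n) (x y : n) : 0 ≤ permWalk σ x y := by
  rw [permWalk_apply]
  positivity

lemma permWalk_apply_pos (σ : ι → Equiv.Perm n) (i : ι) (x : n) : 0 < permWalk σ x (σ i x) := by
  have : Nonempty ι := ⟨i⟩
  rw [permWalk_apply]
  exact Finset.sum_pos' (fun _ _ => by positivity)
    ⟨i, Finset.mem_univ i, by rw [if_pos rfl]; positivity⟩

lemma permWalk_mulVec_apply [Fintype n] (f : n → ℝ) (x : n) :
    (permWalk σ).mulVec f x = (∑ i, f (σ i x)) / Fintype.card ι := by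
  simp [permWalk, Matrix.sum_mulVec, Matrix.smul_mulVec, Matrix.permMatrix_mulVec,
    Finset.sum_apply, Finset.mul_sum, div_eq_inv_mul]

lemma permWalk_mem_doublyStochastic [Fintype n] [Nonempty ι] :
    permWalk σ ∈ doublyStochastic ℝ n :=
  convex_doublyStochastic.sum_mem (fun _ _ => by positivity) (by simp)
    fun _ _ => permMatrix_mem_doublyStochastic

lemma exists_permWalk_pow_pos [Fintype n] {g : Equiv.Perm n}
    (hg : g ∈ Subgroup.closure (Set.range σ)) (x : n) : ∃ k, 0 < (permWalk σ ^ k) x (g x) := by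
  rw [← Subgroup.mem_toSubmonoid, Subgroup.closure_toSubmonoid_of_finite] at hg
  induction hg using Submonoid.closure_induction generalizing x with
  | mem g hg =>
    obtain ⟨i, rfl⟩ := hg
    exact ⟨1, by simpa using permWalk_apply_pos σ i x⟩
  | one => exact ⟨0, by simp⟩
  | mul g h _ _ ihg ihh =>
    obtain ⟨k, hk⟩ := ihh x
    obtain ⟨l, hl⟩ := ihg (h x)
    exact ⟨k + l, matrix_pow_add_apply_pos (permWalk_apply_nonneg σ) hk hl⟩

theorem permWalk_isIrreducible [Finite n] [Nonempty ι]
    [MulAction.IsPretransitive (Subgroup.closure (Set.range σ)) n] :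
    (permWalk σ).IsIrreducible := by
  cases nonempty_fintype n
  refine (Matrix.isIrreducible_iff_exists_pow_pos (permWalk_apply_nonneg σ)).2 fun x y => ?_
  obtain ⟨i⟩ := ‹Nonempty ι›
  obtain ⟨⟨g, hg⟩, rfl⟩ := MulAction.exists_smul_eq (Subgroup.closure (Set.range σ)) (σ i x) y
  obtain ⟨k, hk⟩ := exists_permWalk_pow_pos hg (σ i x)
  have hstep : 0 < (permWalk σ ^ 1) x (σ i x) := by simpa using permWalk_apply_pos σ i x
  exact ⟨1 + k, by omega, matrix_pow_add_apply_pos (permWalk_apply_nonneg σ) hstep hk⟩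

theorem tendsto_permWalk_pow_mulVec [Fintype n]
    [MulAction.IsPretransitive (Subgroup.closure (Set.range σ)) n]
    {i : ι} {o : n} (ho : σ i o = o) (f : n → ℝ) (x : n) :
    Tendsto (fun k => (permWalk σ ^ k).mulVec f x) atTop
      (nhds ((∑ y, f y) / Fintype.card n)) := by
  have : Nonempty ι := ⟨i⟩
  have hloop : 0 < permWalk σ o o := by simpa only [ho] using permWalk_apply_pos σ i o
  have hprim := isPrimitive_of_isIrreducible_of_apply_self_pos permWalk_isIrreducible hloop
  rw [div_eq_inv_mul, Finset.mul_sum]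
  exact tendsto_finsetSum _ fun y _ =>
    (tendsto_pow_apply_of_mem_doublyStochastic permWalk_mem_doublyStochastic hprim
      x y).mul_const (f y)

end PermWalk

section LocalRing

variable {R : Type*} [CommRing R] [IsLocalRing R]

lemma isCoprime_iff_isUnit_or_isUnit {a b : R} : IsCoprime a b ↔ IsUnit a ∨ IsUnit b := by
  refine ⟨fun ⟨u, v, huv⟩ => ?_, ?_⟩
  · exact (IsLocalRing.isUnit_or_isUnit_of_add_one huv).imp isUnit_of_mul_isUnit_right
      isUnit_of_mul_isUnit_right
  · rintro (h | h) <;> obtain ⟨c, hc⟩ := h.exists_left_inv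
    · exact ⟨c, 0, by simp [hc]⟩
    · exact ⟨0, c, by simp [hc]⟩

lemma not_isCoprime_iff_mem_maximalIdeal {a b : R} :
    ¬IsCoprime a b ↔ a ∈ IsLocalRing.maximalIdeal R ∧ b ∈ IsLocalRing.maximalIdeal R := by
  simp [isCoprime_iff_isUnit_or_isUnit]

lemma card_units_add_card_maximalIdeal [Finite R] :
    Nat.card Rˣ + Nat.card (IsLocalRing.maximalIdeal R) = Nat.card R := by
  classical
  rw [← Nat.card_congr (Equiv.sumCompl fun x : R => IsUnit x), Nat.card_sum]
  exact congrArg (· + _) (Nat.card_congr Submonoid.unitsTypeEquivIsUnitSubmonoid.toEquiv)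

end LocalRing

/-- Pairs `(a, b)` generating the unit ideal of `R`, the reductions of fractions `a / b` in lowest
terms. -/
abbrev CoprimePair (R : Type*) [CommRing R] := {v : R × R // IsCoprime v.1 v.2}

namespace CoprimePair

section CommRing

variable {R : Type*} [CommRing R]

noncomputable instance [Finite R] : Fintype (CoprimePair R) := Fintype.ofFinite _

/-- The shear `(a, b) ↦ (a + t * b, b)`, corresponding to `x ↦ x + t`. -/
def shearLeft (t : R) : Equiv.Perm (CoprimePair R) where
  toFun v := ⟨(v.1.1 + t * v.1.2, v.1.2), v.2.add_mul_right_left t⟩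
  invFun v := ⟨(v.1.1 + -t * v.1.2, v.1.2), v.2.add_mul_right_left (-t)⟩
  left_inv v := by simp
  right_inv v := by simp

/-- The shear `(a, b) ↦ (a, b + t * a)`, corresponding to `x ↦ x / (t * x + 1)`. -/
def shearRight (t : R) : Equiv.Perm (CoprimePair R) where
  toFun v := ⟨(v.1.1, v.1.2 + t * v.1.1), v.2.add_mul_right_right t⟩
  invFun v := ⟨(v.1.1, v.1.2 + -t * v.1.1), v.2.add_mul_right_right (-t)⟩
  left_inv v := by simp
  right_inv v := by simp

lemma shearLeft_natCast (k : ℕ) : shearLeft (k : R) = shearLeft 1 ^ k := by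
  induction k with
  | zero => ext <;> simp [shearLeft]
  | succ k ih =>
    rw [pow_succ', ← ih]
    ext <;> simp [shearLeft, add_mul, add_assoc]

lemma shearRight_natCast (k : ℕ) : shearRight (k : R) = shearRight 1 ^ k := by
  induction k with
  | zero => ext <;> simp [shearRight]
  | succ k ih =>
    rw [pow_succ', ← ih]
    ext <;> simp [shearRight, add_mul, add_assoc]

/-- The pairs `(a, b)` with `a = w * b`, that is, of ratio `w`, parametrized by the unit `b`. -/
def ratioFiber [Fintype Rˣ] (w : R) : Finset (CoprimePair R) :=
  Finset.univ.map ⟨fun u : Rˣ => ⟨(w * u, u), 0, ↑u⁻¹, by simp⟩, fun u u' h => by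
    simpa [Units.ext_iff] using congrArg (fun v => v.1.2) h⟩

lemma isUnit_snd_of_fst_eq_mul {w : R} {v : CoprimePair R} (h : v.1.1 = w * v.1.2) :
    IsUnit v.1.2 := by
  have hcop := v.2
  rw [h] at hcop
  exact isCoprime_self.1 hcop.of_mul_left_right

lemma mem_ratioFiber [Fintype Rˣ] {w : R} {v : CoprimePair R} :
    v ∈ ratioFiber w ↔ v.1.1 = w * v.1.2 := by
  simp only [ratioFiber, Finset.mem_map, Finset.mem_univ, true_and]
  refine ⟨?_, fun h => ?_⟩
  · rintro ⟨u, rfl⟩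
    rfl
  · obtain ⟨u, hu⟩ := isUnit_snd_of_fst_eq_mul h
    exact ⟨u, Subtype.ext (Prod.ext (by rw [h, ← hu]; rfl) hu)⟩

lemma card_ratioFiber [Fintype Rˣ] (w : R) : (ratioFiber w).card = Fintype.card Rˣ :=
  Finset.card_map _

end CommRing

section IsLocalRing

variable {R : Type*} [CommRing R] [IsLocalRing R]

theorem isPretransitive_of_shear_mem {H : Subgroup (Equiv.Perm (CoprimePair R))}
    (hleft : ∀ t, shearLeft t ∈ H) (hright : ∀ t, shearRight t ∈ H) :
    MulAction.IsPretransitive H (CoprimePair R) := by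
  let o : CoprimePair R := ⟨(1, 1), isCoprime_one_left⟩
  -- If `v.1.1` is a unit, a shear turns the second entry into `1`, and then another the first.
  have exists_of_isUnit (v : CoprimePair R) (hv : IsUnit v.1.1) : ∃ g ∈ H, g v = o := by
    obtain ⟨c, hc⟩ := hv.exists_left_inv
    refine ⟨shearLeft (1 - v.1.1) * shearRight ((1 - v.1.2) * c),
      H.mul_mem (hleft _) (hright _), ?_⟩
    ext <;> simp [shearLeft, shearRight, o, mul_assoc, hc]
  refine (MulAction.isPretransitive_iff_base o).2 fun v => ?_
  suffices ∃ g ∈ H, g v = o by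
    obtain ⟨g, hg, hgv⟩ := this
    exact ⟨⟨g, hg⟩⁻¹, inv_smul_eq_iff.2 hgv.symm⟩
  obtain hv | hv := isCoprime_iff_isUnit_or_isUnit.1 v.2
  · exact exists_of_isUnit v hv
  · obtain ⟨c, hc⟩ := hv.exists_left_inv
    obtain ⟨g, hg, hgv⟩ := exists_of_isUnit (shearLeft ((1 - v.1.1) * c) v)
      (by simp [shearLeft, mul_assoc, hc])
    exact ⟨g * shearLeft ((1 - v.1.1) * c), H.mul_mem hg (hleft _), hgv⟩

lemma card_eq_card_units_mul [Finite R] : Nat.card (CoprimePair R) =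
    Nat.card Rˣ * (Nat.card R + Nat.card (IsLocalRing.maximalIdeal R)) := by
  have hsplit : Nat.card (CoprimePair R) + Nat.card (IsLocalRing.maximalIdeal R) ^ 2 =
      Nat.card R ^ 2 := by
    classical
    rw [sq, sq, ← Nat.card_prod, ← Nat.card_prod, ← Nat.card_congr (Equiv.sumCompl
      fun v : R × R => IsCoprime v.1 v.2), Nat.card_sum]
    exact congrArg (_ + ·) (Nat.card_congr ((Equiv.subtypeEquivRight
      fun v => not_isCoprime_iff_mem_maximalIdeal).trans Equiv.subtypeProdEquivProd)).symm
  have hunits := card_units_add_card_maximalIdeal (R := R)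
  rw [← hunits] at hsplit ⊢
  linarith

theorem dens_ratioFiber [Finite R] [Fintype Rˣ] (w : R) : ((ratioFiber w).dens : ℝ) =
    1 / (Nat.card R + Nat.card (IsLocalRing.maximalIdeal R)) := by
  have hunits : (Nat.card Rˣ : ℝ) ≠ 0 := by exact_mod_cast Nat.card_pos.ne'
  rw [Finset.nnratCast_dens, card_ratioFiber, ← Nat.card_eq_fintype_card,
    ← Nat.card_eq_fintype_card, card_eq_card_units_mul, Nat.cast_mul, Nat.cast_add,
    div_mul_cancel_left₀ hunits, one_div]

end IsLocalRing

end CoprimePair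

section Reduction

/-- The reduction `(a, b)` in `R` of a rational number `a / b` in lowest terms. -/
def reduction (R : Type*) [CommRing R] (q : ℚ) : CoprimePair R :=
  ⟨(q.num, q.den), by simpa using q.isCoprime_num_den.map (Int.castRingHom R)⟩

variable {R : Type*} [CommRing R]

lemma reduction_div {a b : ℤ} (hab : IsCoprime a b) (hb : 0 < b) :
    (reduction R (a / b)).1 = ((a : R), (b : R)) := by
  have hab' := Int.isCoprime_iff_nat_coprime.1 hab
  refine Prod.ext (congrArg (Int.cast : ℤ → R) (Rat.num_div_eq_of_coprime hb hab')) ?_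
  exact (Int.cast_natCast _).symm.trans
    (congrArg (Int.cast : ℤ → R) (Rat.den_div_eq_of_coprime hb hab'))

lemma reduction_add_one (q : ℚ) :
    reduction R (q + 1) = CoprimePair.shearLeft 1 (reduction R q) := by
  have hcop : IsCoprime (q.num + q.den * 1) (q.den : ℤ) :=
    q.isCoprime_num_den.add_mul_left_left 1
  have hq : q + 1 = ((q.num + q.den * 1 : ℤ) : ℚ) / (q.den : ℤ) := by
    conv_lhs => rw [← q.num_div_den]
    push_cast
    field_simp
  rw [hq]
  refine Subtype.ext ((reduction_div hcop (by exact_mod_cast q.pos)).trans ?_)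
  simp [CoprimePair.shearLeft, reduction]

lemma reduction_div_add_one {q : ℚ} (hq : 0 < q) :
    reduction R (q / (q + 1)) = CoprimePair.shearRight 1 (reduction R q) := by
  have hcop : IsCoprime q.num (q.den + q.num * 1) := q.isCoprime_num_den.add_mul_left_right 1
  have hden : 0 < q.den + q.num * 1 :=
    add_pos (by exact_mod_cast q.pos) (by simpa using hq)
  have hdiv : q / (q + 1) = (q.num : ℚ) / ((q.den + q.num * 1 : ℤ) : ℚ) := by
    conv_lhs => rw [← q.num_div_den]
    push_cast
    field_simp
    ring
  rw [hdiv]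
  refine Subtype.ext ((reduction_div hcop hden).trans ?_)
  simp [CoprimePair.shearRight, reduction]

end Reduction

section CalkinWilfTree

lemma pos_of_mem_CW {n : ℕ} {q : ℚ} (hq : q ∈ CW n) : 0 < q := by
  induction n generalizing q with
  | zero => simp_all [CW]
  | succ n ih =>
    simp only [CW, List.mem_flatMap, List.mem_cons, List.not_mem_nil, or_false] at hq
    obtain ⟨x, hx, rfl | rfl⟩ := hq <;> have := ih hx <;> positivity

lemma length_CW (n : ℕ) : (CW n).length = 2 ^ n := by
  induction n with
  | zero => rfl
  | succ n ih => simp [CW, List.length_flatMap, ih, pow_succ]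

lemma map_inv_CW (n : ℕ) : (CW n).map (·⁻¹) = (CW n).reverse := by
  induction n with
  | zero => simp [CW]
  | succ n ih =>
    rw [CW, List.reverse_flatMap, ← ih, List.map_flatMap, List.flatMap_map]
    refine List.flatMap_congr fun q hq => ?_
    have hq := pos_of_mem_CW hq
    have hleft : (q / (q + 1))⁻¹ = q⁻¹ + 1 := by field_simp; ring
    have hright : (q + 1)⁻¹ = q⁻¹ / (q⁻¹ + 1) := by field_simp; ring
    simp [hleft, hright]

lemma countP_inv_CW (P : ℚ → Bool) (n : ℕ) :
    (CW n).countP (fun q => P q⁻¹) = (CW n).countP P := by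
  rw [← List.countP_reverse (l := CW n) (p := P), ← map_inv_CW, List.countP_map]
  rfl

end CalkinWilfTree

section CalkinWilfWalk

/-- The action on reductions of passing from an entry of the Calkin–Wilf tree to its left child
`x / (x + 1)` (index `0`) and right child `x + 1` (index `1`). -/
def childStep (R : Type*) [CommRing R] : Fin 2 → Equiv.Perm (CoprimePair R) :=
  ![CoprimePair.shearRight 1, CoprimePair.shearLeft 1]

variable {R : Type*} [CommRing R]

lemma sum_CW_succ (f : CoprimePair R → ℝ) (n : ℕ) :
    ((CW (n + 1)).map (fun q => f (reduction R q))).sum =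
      ((CW n).map (fun q => ∑ i, f (childStep R i (reduction R q)))).sum := by
  rw [CW, List.map_flatMap, List.flatMap, List.sum_flatten, List.map_map]
  refine congrArg List.sum (List.map_congr_left fun q hq => ?_)
  simp [childStep, reduction_add_one, reduction_div_add_one (pos_of_mem_CW hq)]

lemma sum_CW_div_two_pow [Fintype (CoprimePair R)] [DecidableEq (CoprimePair R)]
    (f : CoprimePair R → ℝ) (n : ℕ) :
    ((CW n).map (fun q => f (reduction R q))).sum / 2 ^ n =
      (permWalk (childStep R) ^ n).mulVec f (reduction R 1) := by
  induction n generalizing f with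
  | zero => simp [CW]
  | succ n ih =>
    have hstep (v : CoprimePair R) :
        ∑ i, f (childStep R i v) = 2 * (permWalk (childStep R)).mulVec f v := by
      rw [permWalk_mulVec_apply, Fintype.card_fin]
      ring
    rw [sum_CW_succ, pow_succ (permWalk _), ← Matrix.mulVec_mulVec, ← ih]
    simp only [hstep, List.sum_map_mul_left, pow_succ']
    exact mul_div_mul_left _ _ two_ne_zero

lemma isPretransitive_closure_childStep (m : ℕ) [NeZero m] [IsLocalRing (ZMod m)] :
    MulAction.IsPretransitive (Subgroup.closure (Set.range (childStep (ZMod m))))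
      (CoprimePair (ZMod m)) := by
  apply CoprimePair.isPretransitive_of_shear_mem <;> intro t <;> rw [← ZMod.natCast_zmod_val t]
  · rw [CoprimePair.shearLeft_natCast]
    exact pow_mem (Subgroup.subset_closure (Set.mem_range.2 ⟨1, rfl⟩)) _
  · rw [CoprimePair.shearRight_natCast]
    exact pow_mem (Subgroup.subset_closure (Set.mem_range.2 ⟨0, rfl⟩)) _

theorem tendsto_sum_CW_div_two_pow (m : ℕ) [NeZero m] [IsLocalRing (ZMod m)]
    (f : CoprimePair (ZMod m) → ℝ) :
    Tendsto (fun n => ((CW n).map (fun q => f (reduction (ZMod m) q))).sum / 2 ^ n) atTop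
      (nhds ((∑ v, f v) / Fintype.card (CoprimePair (ZMod m)))) := by
  have := isPretransitive_closure_childStep m
  let o : CoprimePair (ZMod m) := ⟨(0, 1), isCoprime_one_right⟩
  have ho : childStep (ZMod m) 0 o = o := by
    ext <;> simp [childStep, CoprimePair.shearRight, o]
  simpa only [sum_CW_div_two_pow] using
    tendsto_permWalk_pow_mulVec ho f (reduction (ZMod m) 1)

end CalkinWilfWalk

section Ultrametric

variable {K : Type*} [NormedField K] [IsUltrametricDist K] {u z : K} {r : ℝ}

lemma norm_inv_sub_inv_le_of_norm_sub_le (hr : r < ‖z‖) (h : ‖u - z‖ ≤ r) :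
    ‖u⁻¹ - z⁻¹‖ ≤ r / ‖z‖ ^ 2 := by
  have hnorm : ‖u‖ = ‖z‖ := by
    rw [← norm_neg z] at hr ⊢
    refine IsUltrametricDist.norm_eq_of_add_norm_lt_max ?_
    rw [← sub_eq_add_neg]
    exact (h.trans_lt hr).trans_le (le_max_right _ _)
  have hz : z ≠ 0 := norm_pos_iff.1 (((norm_nonneg _).trans h).trans_lt hr)
  have hu : u ≠ 0 := norm_ne_zero_iff.1 (hnorm.trans_ne (norm_ne_zero_iff.2 hz))
  rw [inv_sub_inv hu hz, norm_div, norm_mul, hnorm, norm_sub_rev, ← sq]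
  gcongr

lemma norm_inv_sub_inv_le_iff (hz : z ≠ 0) (hr : r < ‖z‖) :
    ‖u⁻¹ - z⁻¹‖ ≤ r / ‖z‖ ^ 2 ↔ ‖u - z‖ ≤ r := by
  refine ⟨fun h => ?_, norm_inv_sub_inv_le_of_norm_sub_le hr⟩
  have hpos : 0 < ‖z‖ := norm_pos_iff.2 hz
  have hr' : r / ‖z‖ ^ 2 < ‖z⁻¹‖ := by
    rw [norm_inv, div_lt_iff₀ (by positivity), sq, inv_mul_cancel_left₀ hpos.ne']
    exact hr
  have h' := norm_inv_sub_inv_le_of_norm_sub_le hr' h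
  rwa [inv_inv, inv_inv, norm_inv, inv_pow, div_inv_eq_mul,
    div_mul_cancel₀ _ (by positivity)] at h'

end Ultrametric

section Padic

variable {p : ℕ} [Fact p.Prime]

lemma toZModPow_eq_zero_iff_norm_le (N : ℕ) (x : ℤ_[p]) :
    PadicInt.toZModPow N x = 0 ↔ ‖x‖ ≤ (p : ℝ) ^ (-(N : ℤ)) := by
  rw [PadicInt.norm_le_pow_iff_mem_span_pow, ← PadicInt.ker_toZModPow, RingHom.mem_ker]

lemma norm_ratCast_sub_le_iff_of_norm_den {q : ℚ} (hden : ‖(q.den : ℚ_[p])‖ = 1) (N : ℕ)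
    (w : ℤ_[p]) : ‖(q : ℚ_[p]) - w‖ ≤ (p : ℝ) ^ (-(N : ℤ)) ↔
      reduction (ZMod (p ^ N)) q ∈ CoprimePair.ratioFiber (PadicInt.toZModPow N w) := by
  have hden₀ : (q.den : ℚ_[p]) ≠ 0 := by exact_mod_cast q.den_nz
  have hclear : (q : ℚ_[p]) - w = ((q.num - w * q.den : ℤ_[p]) : ℚ_[p]) / q.den := by
    rw [eq_div_iff hden₀, sub_mul]
    push_cast
    rw [← Rat.cast_natCast, ← Rat.cast_mul, Rat.mul_den_eq_num, Rat.cast_intCast]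
  rw [hclear, norm_div, hden, div_one, ← PadicInt.norm_def, ← toZModPow_eq_zero_iff_norm_le,
    map_sub, map_mul, map_intCast, map_natCast, sub_eq_zero, CoprimePair.mem_ratioFiber]
  rfl

lemma norm_ratCast_sub_le_iff {N : ℕ} (hN : N ≠ 0) (w : ℤ_[p]) (q : ℚ) :
    ‖(q : ℚ_[p]) - w‖ ≤ (p : ℝ) ^ (-(N : ℤ)) ↔
      reduction (ZMod (p ^ N)) q ∈ CoprimePair.ratioFiber (PadicInt.toZModPow N w) := by
  have hp : (1 : ℝ) ≤ p := by exact_mod_cast (Fact.out : p.Prime).one_le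
  -- Either side forces `q.den` to be prime to `p`.
  refine ⟨fun h => (norm_ratCast_sub_le_iff_of_norm_den ?_ N w).1 h,
    fun h => (norm_ratCast_sub_le_iff_of_norm_den ?_ N w).2 h⟩
  · have hq : ‖(q : ℚ_[p])‖ ≤ 1 := by
      rw [← sub_add_cancel (q : ℚ_[p]) w]
      exact (Padic.nonarchimedean _ _).trans
        (max_le (h.trans (zpow_le_one_of_nonpos₀ hp (by omega))) w.2)
    exact PadicInt.isUnit_iff.1 (PadicInt.isUnit_den q hq)
  · have hunit : IsUnit (q.den : ZMod (p ^ N)) :=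
      CoprimePair.isUnit_snd_of_fst_eq_mul (CoprimePair.mem_ratioFiber.1 h)
    rw [ZMod.isUnit_iff_coprime, Nat.coprime_pow_right_iff (Nat.pos_of_ne_zero hN)] at hunit
    exact Padic.norm_natCast_eq_one_iff.2 hunit.symm

lemma isLocalRing_zmod_prime_pow {N : ℕ} (hN : N ≠ 0) : IsLocalRing (ZMod (p ^ N)) := by
  have : Fact (1 < p ^ N) := ⟨Nat.one_lt_pow hN (Fact.out : p.Prime).one_lt⟩
  exact IsLocalRing.of_surjective' (PadicInt.toZModPow N) (ZMod.ringHom_surjective _)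

lemma card_maximalIdeal_zmod_prime_pow {N : ℕ} (hN : N ≠ 0) [IsLocalRing (ZMod (p ^ N))] :
    Nat.card (IsLocalRing.maximalIdeal (ZMod (p ^ N))) = p ^ (N - 1) := by
  have hsum := card_units_add_card_maximalIdeal (R := ZMod (p ^ N))
  rw [Nat.card_eq_fintype_card, ZMod.card_units_eq_totient, Nat.card_zmod,
    Nat.totient_prime_pow Fact.out (Nat.pos_of_ne_zero hN)] at hsum
  have hpow : p ^ (N - 1) * (p - 1) + p ^ (N - 1) = p ^ N := by
    rw [← mul_add_one, Nat.sub_add_cancel (Fact.out : p.Prime).one_le, pow_sub_one_mul hN]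
  exact Nat.add_left_cancel (hsum.trans hpow.symm)

end Padic

section Frequency

variable {p : ℕ} [Fact p.Prime] {ν : ℤ} {z : ℚ_[p]}

open scoped Classical in
lemma FcwP_eq_countP (ν : ℤ) (z : ℚ_[p]) (n : ℕ) :
    FcwP p ν z n =
      (CW n).countP (fun q : ℚ => decide (‖(q : ℚ_[p]) - z‖ ≤ (p : ℝ) ^ (-ν))) / 2 ^ n := by
  -- The list coercion in `FcwP` elaborates to a monadic bind.
  have hcast : (do let q ← CW n; pure (q : ℚ_[p])) = (CW n).map (fun q : ℚ => (q : ℚ_[p])) :=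
    List.map_eq_flatMap.symm
  rw [FcwP, hcast, List.countP_map]
  rfl

lemma FcwP_inv {lam : ℤ} (hz : ‖z‖ = (p : ℝ) ^ lam) (hν : -lam < ν) :
    FcwP p (ν + 2 * lam) z⁻¹ = FcwP p ν z := by
  have hp : (1 : ℝ) < p := by exact_mod_cast (Fact.out : p.Prime).one_lt
  have hlt : (p : ℝ) ^ (-ν) < ‖z‖ := hz ▸ zpow_lt_zpow_right₀ hp (by omega)
  have hz₀ : z ≠ 0 := norm_pos_iff.1 ((by positivity : (0 : ℝ) < p ^ (-ν)).trans hlt)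
  have hradius : (p : ℝ) ^ (-(ν + 2 * lam)) = (p : ℝ) ^ (-ν) / ‖z‖ ^ 2 := by
    rw [hz, ← zpow_natCast, ← zpow_mul, ← zpow_sub₀ (by positivity)]
    congr 1
    push_cast
    ring
  ext n
  simp only [FcwP_eq_countP, hradius]
  rw [← countP_inv_CW]
  simp only [Rat.cast_inv, norm_inv_sub_inv_le_iff hz₀ hlt]

lemma norm_sub_le_zpow_iff_not_norm_inv_le {u : ℚ_[p]} (hu : u ≠ 0)
    (hz : ‖z‖ ≤ (p : ℝ) ^ (-ν)) :
    ‖u - z‖ ≤ (p : ℝ) ^ (-ν) ↔ ¬‖u⁻¹‖ ≤ (p : ℝ) ^ (-(1 - ν)) := by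
  have hp : (0 : ℝ) < p := by exact_mod_cast (Fact.out : p.Prime).pos
  have hball : ‖u - z‖ ≤ (p : ℝ) ^ (-ν) ↔ ‖u‖ ≤ (p : ℝ) ^ (-ν) := by
    rw [← mem_closedBall_iff_norm, ← mem_closedBall_zero_iff,
      ← IsUltrametricDist.closedBall_eq_of_mem (mem_closedBall_zero_iff.2 hz)]
  rw [hball, Padic.norm_le_pow_iff_norm_lt_pow_add_one, not_le, norm_inv,
    lt_inv_comm₀ (by positivity) (norm_pos_iff.2 hu), ← zpow_neg]
  ring_nf

lemma FcwP_eq_one_sub (hz : ‖z‖ ≤ (p : ℝ) ^ (-ν)) (n : ℕ) :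
    FcwP p ν z n = 1 - FcwP p (1 - ν) 0 n := by
  classical
  have hcompl : (CW n).countP (fun q : ℚ => decide (‖(q : ℚ_[p]) - z‖ ≤ (p : ℝ) ^ (-ν))) =
      (CW n).countP (fun q : ℚ => ¬decide (‖(q⁻¹ : ℚ_[p]) - 0‖ ≤ (p : ℝ) ^ (-(1 - ν)))) := by
    refine List.countP_congr fun q hq => ?_
    have hq₀ : (q : ℚ_[p]) ≠ 0 := by exact_mod_cast (pos_of_mem_CW hq).ne'
    simpa using norm_sub_le_zpow_iff_not_norm_inv_le hq₀ hz
  have hinv := countP_inv_CW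
    (fun q : ℚ => decide (‖(q : ℚ_[p]) - 0‖ ≤ (p : ℝ) ^ (-(1 - ν)))) n
  simp only [Rat.cast_inv] at hinv
  rw [FcwP_eq_countP, FcwP_eq_countP, ← hinv, hcompl, eq_sub_iff_add_eq', ← add_div,
    div_eq_one_iff_eq (by positivity), ← Nat.cast_add, ← List.length_eq_countP_add_countP,
    length_CW, Nat.cast_pow, Nat.cast_ofNat]

lemma natCast_countP_eq_sum {α : Type*} (P : α → Prop) [DecidablePred P] (l : List α) :
    (l.countP P : ℝ) = (l.map fun a => if P a then (1 : ℝ) else 0).sum := by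
  induction l with
  | nil => simp
  | cons a l ih => by_cases h : P a <;> simp [h, ih, add_comm]

lemma tendsto_FcwP_of_forall_iff {N : ℕ} (hN : N ≠ 0) (S : Finset (CoprimePair (ZMod (p ^ N))))
    (h : ∀ q : ℚ, ‖(q : ℚ_[p]) - z‖ ≤ (p : ℝ) ^ (-ν) ↔ reduction (ZMod (p ^ N)) q ∈ S) :
    Tendsto (FcwP p ν z) atTop (nhds S.dens) := by
  classical
  have := isLocalRing_zmod_prime_pow (p := p) hN
  have hcount (n : ℕ) : FcwP p ν z n = ((CW n).map
      fun q => if reduction (ZMod (p ^ N)) q ∈ S then (1 : ℝ) else 0).sum / 2 ^ n := by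
    rw [FcwP_eq_countP, ← natCast_countP_eq_sum]
    simp only [h]
  have hlim := tendsto_sum_CW_div_two_pow (p ^ N) fun v => if v ∈ S then (1 : ℝ) else 0
  simp only [Finset.sum_boole, Finset.filter_univ_mem] at hlim
  rw [Finset.nnratCast_dens]
  exact hlim.congr fun n => (hcount n).symm

theorem tendsto_FcwP_of_norm_le_one (hz : ‖z‖ ≤ 1) (hν : 1 ≤ ν) :
    Tendsto (FcwP p ν z) atTop (nhds (1 / ((p : ℝ) ^ ν + (p : ℝ) ^ (ν - 1)))) := by
  lift ν to ℕ using by omega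
  have hν₀ : ν ≠ 0 := by omega
  have := isLocalRing_zmod_prime_pow (p := p) hν₀
  have hlim := tendsto_FcwP_of_forall_iff hν₀
    (CoprimePair.ratioFiber (PadicInt.toZModPow ν ⟨z, hz⟩)) (norm_ratCast_sub_le_iff hν₀ ⟨z, hz⟩)
  rw [CoprimePair.dens_ratioFiber, Nat.card_zmod, card_maximalIdeal_zmod_prime_pow hν₀] at hlim
  have hpred : (ν : ℤ) - 1 = (ν - 1 : ℕ) := by omega
  rw [hpred]
  exact_mod_cast hlim

end Frequency

theorem calkin_wilf_padic_distribution_general (p : ℕ) [Fact p.Prime] (z : ℚ_[p]) (ν : ℤ) :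
    (‖z‖ ≤ 1 → 1 ≤ ν →
      Tendsto (FcwP p ν z) atTop (nhds (1 / ((p : ℝ) ^ ν + (p : ℝ) ^ (ν - 1))))) ∧
    (∀ lam : ℤ, 0 ≤ lam → ‖z‖ = (p : ℝ) ^ lam → -lam < ν →
      Tendsto (FcwP p ν z) atTop
        (nhds (1 / ((p : ℝ) ^ (ν + 2 * lam) + (p : ℝ) ^ (ν + 2 * lam - 1))))) ∧
    (ν ≤ 0 → ‖z‖ ≤ (p : ℝ) ^ (-ν) →
      Tendsto (FcwP p ν z) atTop
        (nhds (1 - 1 / ((p : ℝ) ^ (1 - ν) + (p : ℝ) ^ (-ν))))) := by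
  have hp : (1 : ℝ) ≤ p := by exact_mod_cast (Fact.out : p.Prime).one_le
  refine ⟨tendsto_FcwP_of_norm_le_one, fun lam hlam hz hν => ?_, fun hν hz => ?_⟩
  · have hinv : ‖z⁻¹‖ ≤ 1 := by
      rw [norm_inv, hz]
      exact inv_le_one_of_one_le₀ (one_le_zpow₀ hp hlam)
    rw [← FcwP_inv hz hν]
    exact tendsto_FcwP_of_norm_le_one hinv (by omega)
  · have hlim := tendsto_FcwP_of_norm_le_one (p := p) (z := 0) (ν := 1 - ν) (by simp) (by omega)
    rw [show 1 - ν - 1 = -ν by ring] at hlim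
    exact (hlim.const_sub 1).congr fun n => (FcwP_eq_one_sub hz n).symm

/-- Limits `μ_p(z,ν) = lim_n F_n(z,ν)` of the `p`-adic distribution of the
Calkin–Wilf tree, for `z ∈ ℚ_p` with `ord_p(z) < ν` or `z = 0`:
(i) if `z` is a `p`-adic integer (including `z = 0`) and `ν ≥ 1`, then
`μ_p(z,ν) = 1/(p^ν + p^(ν−1))`;
(ii) if `ord_p(z) = −λ < 0`, then `μ_p(z,ν) = 1/(p^(ν+2λ) + p^(ν+2λ−1))`;
(iii) for `z = 0` and every `ν ≥ 0`, `μ_p(0,−ν) = 1 − 1/(p^(ν+1) + p^ν)`. -/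
theorem calkin_wilf_padic_distribution (p : ℕ) [Fact p.Prime] :
    (∀ (ν : ℤ), 1 ≤ ν → ∀ z : ℚ_[p], ‖z‖ ≤ 1 → (z = 0 ∨ z.valuation < ν) →
      Tendsto (FcwP p ν z) atTop
        (nhds (1 / ((p : ℝ) ^ ν + (p : ℝ) ^ (ν - 1))))) ∧
    (∀ (ν lam : ℤ), 0 < lam → ∀ z : ℚ_[p], z ≠ 0 → z.valuation = -lam →
      z.valuation < ν →
      Tendsto (FcwP p ν z) atTop
        (nhds (1 / ((p : ℝ) ^ (ν + 2 * lam) + (p : ℝ) ^ (ν + 2 * lam - 1))))) ∧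
    (∀ ν : ℤ, 0 ≤ ν →
      Tendsto (FcwP p (-ν) (0 : ℚ_[p])) atTop
        (nhds (1 - 1 / ((p : ℝ) ^ (ν + 1) + (p : ℝ) ^ ν)))) :=
  ⟨fun ν hν z hz _ => (calkin_wilf_padic_distribution_general p z ν).1 hz hν,
    fun ν lam hlam z hz hval hlt => (calkin_wilf_padic_distribution_general p z ν).2.1 lam hlam.le
      (by rw [Padic.norm_eq_zpow_neg_valuation hz, hval, neg_neg]) (hval ▸ hlt),
    fun ν hν => by
      simpa [add_comm] using (calkin_wilf_padic_distribution_general p 0 (-ν)).2.2 (by omega)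
        (by rw [norm_zero]; positivity)⟩
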